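/- arXiv:1411.6963 — 2 statements merged into one kernel-verified Lean document; each statement's English description precedes it below -/
import Mathlib

section
/- Let a, b be positive integers with a ≤ b. If the quadratic form f^{a,b}_3(x,y,z,w) = a·x² + b·y² + 3·(z² + z·w + w²) represents each of the integers 1, 2, 6 (with x, y, z, w ∈ ℤ), then it represents every nonnegative integer. -/
/-!
Put `N(z, w) = z² + zw + w²`. Representing `1`, `2` and `6` forces `a = 1` and `b = 2`, so the claim
is that `f = x² + 2y² + 3N(z, w)` represents every natural number.

The main input is arithmetic of the ternary form `g = u² + N(v, w)`. It has (half-)discriminant `3`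
and is the only positive integral ternary form of that discriminant up to equivalence
(`ternary_class_one`, by Hermite reduction). Hence `g` represents `m` as soon as some positive form
of discriminant `3` has `m` among its diagonal coefficients. Such a form is found, as in the proof of
the three-square theorem, from Dirichlet's theorem on primes in arithmetic progressions and quadratic
reciprocity (`rep_of_prime`); this works for `m` prime to `3` (`rep_of_not_dvd`) and for
`m ≡ 3 mod 9` (`rep_of_mod_nine`).

The passage from `g` to `f` rests on the residue of `n` modulo `3`, by strong induction.
* If `n = 3k`, then `3(x² + 2y²) = (x + 2y)² + 2(x - y)²` and `3N` is again a value of `N`, so a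
  representation of `k` gives one of `n`.
* If `n ≡ 1`, write `n = u² + N(v, w)`. When `3 ∤ u`, the term `N(v, w)` is divisible by `3`, hence
  of the form `3N`. When `u = 3k`, write `N(v, w) = p² + 3r²` and use `n = p² + 3(r² + 3k²)`.
* If `n ≡ 2`, choose `y ∈ {1, 2, 4}` with `n - 2y² ≡ 3 mod 9`. In a representation
  `n - 2y² = u² + N(v, w)` the term `N(v, w)` is divisible by `3`, hence of the form `3N`.
-/

/-! ### Reduction of ternary forms of discriminant 3 -/

theorem exists_shift (a t : ℤ) (ha : 0 < a) : ∃ k : ℤ, |t + 2 * a * k| ≤ a := by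
  refine ⟨-((t + a) / (2 * a)), ?_⟩
  have h1 := Int.emod_add_mul_ediv (t + a) (2 * a)
  have h2 := Int.emod_nonneg (t + a) (show 2 * a ≠ 0 by omega)
  have h3 := Int.emod_lt_of_pos (t + a) (show 0 < 2 * a by omega)
  rw [abs_le]; constructor <;> linarith

/-- Lagrange reduction of a positive binary form `Ay² + Byz + Cz²`: after a substitution of
determinant `1`, with columns `(p, e)` and `(q, f)`, its coefficients satisfy `|B'| ≤ A' ≤ C'`.
The number `n` is an upper bound for `A`, on which the induction runs. -/
theorem binary_reduction (n : ℕ) : ∀ A B C : ℤ, A.toNat ≤ n → 0 < A → 0 < 4 * A * C - B ^ 2 →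
    ∃ p q e f : ℤ, p * f - q * e = 1 ∧ ∃ A' B' C' : ℤ,
      A' = A * p ^ 2 + B * p * e + C * e ^ 2 ∧
      B' = 2 * A * p * q + B * (p * f + q * e) + 2 * C * e * f ∧
      C' = A * q ^ 2 + B * q * f + C * f ^ 2 ∧ 0 < A' ∧ |B'| ≤ A' ∧ A' ≤ C' := by
  induction n with
  | zero => intro A B C h h0; omega
  | succ n ih =>
    intro A B C hn hA hD
    obtain ⟨k, hk⟩ := exists_shift A B hA
    by_cases hC : A ≤ A * k ^ 2 + B * k + C
    · exact ⟨1, k, 0, 1, by ring, _, _, _, rfl, rfl, rfl, by linarith,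
        by convert hk using 2 <;> ring, by linarith⟩
    · push Not at hC
      have hC0 : 0 < A * k ^ 2 + B * k + C := by
        have : 0 < 4 * A * (A * k ^ 2 + B * k + C) := by nlinarith [sq_nonneg (2 * A * k + B)]
        exact pos_of_mul_pos_right this (by linarith)
      obtain ⟨p, q, e, f, hdet, A', B', C', h1, h2, h3, h4⟩ :=
        ih (A * k ^ 2 + B * k + C) (-(B + 2 * A * k)) A (by omega) hC0 (by nlinarith)
      refine ⟨k * p - e, k * q - f, p, q, by linear_combination hdet, A', B', C', ?_, ?_, ?_, h4⟩
      · rw [h1]; ring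
      · rw [h2]; ring
      · rw [h3]; ring

/-- A reduced form with leading coefficient `1` and discriminant `3` is, up to signs and order of the
variables, `u² + v² + vw + w²`. The hypotheses say that the binary form
`4h - (2x + ty + sz)²` in `y, z` is reduced, where `h` is the given form. -/
theorem ternary_final (b c r s t : ℤ) (hA : 0 < 4 * b - t ^ 2)
    (hd : 4 * b * c + r * s * t - r ^ 2 - b * s ^ 2 - c * t ^ 2 = 3)
    (ht : |t| ≤ 1) (hs : |s| ≤ 1) (hB : |4 * r - 2 * s * t| ≤ 4 * b - t ^ 2)
    (hC : 4 * b - t ^ 2 ≤ 4 * c - s ^ 2) (x y z : ℤ) :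
    ∃ u v w : ℤ, x ^ 2 + b * y ^ 2 + c * z ^ 2 + r * y * z + s * x * z + t * x * y =
      u ^ 2 + v ^ 2 + v * w + w ^ 2 := by
  have hdisc : 4 * (4 * b - t ^ 2) * (4 * c - s ^ 2) - (4 * r - 2 * s * t) ^ 2 = 48 := by
    linear_combination 16 * hd
  have hB2 := sq_le_sq' (neg_le_of_abs_le hB) (le_of_abs_le hB)
  have hA4 : 4 * b - t ^ 2 ≤ 4 := by nlinarith
  rw [abs_le] at ht hs hB
  obtain ⟨ht1, ht2⟩ := ht
  obtain ⟨hs1, hs2⟩ := hs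
  have hb : b = 1 := by
    interval_cases t <;> omega
  subst hb
  have hc : c = 1 ∧ s = 0 := by
    interval_cases t <;> interval_cases s <;> norm_num at * <;>
    (have : r ≤ 1 := by omega
     have : -1 ≤ r := by omega
     interval_cases r <;> omega)
  obtain ⟨rfl, rfl⟩ := hc
  interval_cases t
  · exact ⟨z, x, -y, by obtain rfl : r = 0 := by (norm_num at hB; omega)
                        ring⟩
  · have h1 : r ^ 2 = 1 := by linarith
    rcases (show r = 1 ∨ r = -1 by simpa using h1) with rfl | rfl
    · exact ⟨x, y, z, by ring⟩
    · exact ⟨x, y, -z, by ring⟩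
  · exact ⟨z, x, y, by obtain rfl : r = 0 := by (norm_num at hB; omega)
                       ring⟩

/-- Hermite's bound: a reduced ternary form of discriminant `3` has leading coefficient `1`. Here
`A, B, C` are the coefficients of the reduced binary form `4ah - (2ax + ty + sz)²`. -/
theorem eq_one_of_bounds (a b A B C t : ℤ) (ha : 0 < a) (hab : a ≤ b)
    (hdisc : 4 * A * C - B ^ 2 = 48 * a) (hB : B ^ 2 ≤ A ^ 2) (hAC : A ≤ C) (hA : 0 < A)
    (ht : t ^ 2 ≤ a ^ 2) (eA : A = 4 * a * b - t ^ 2) : a = 1 := by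
  have h1 : A ^ 2 ≤ 16 * a := by nlinarith
  have h2 : 3 * a ^ 2 ≤ A := by nlinarith
  by_contra hne
  have h3 : 2 ≤ a := by omega
  have h4 : (3 * a ^ 2) ^ 2 ≤ 16 * a := le_trans (pow_le_pow_left₀ (by positivity) h2 2) h1
  have h5 : a * 8 ≤ a * a ^ 3 :=
    mul_le_mul_of_nonneg_left (by nlinarith [pow_le_pow_left₀ (by norm_num) h3 3]) ha.le
  nlinarith

/-- Every value of a positive ternary form of discriminant `3` is a value of
`u² + v² + vw + w²`. The number `n` is an upper bound for the leading coefficient `a`: the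
binary form `4ah - (2ax + ty + sz)²` is reduced first, then `t` and `s` are made small by shifting
`x`; if the new second coefficient is below `a`, swapping `x` and `y` lowers the leading
coefficient. -/
theorem ternary_class_one (n : ℕ) : ∀ a b c r s t : ℤ, a.toNat ≤ n → 0 < a → 0 < 4 * a * b - t ^ 2 →
    4 * a * b * c + r * s * t - a * r ^ 2 - b * s ^ 2 - c * t ^ 2 = 3 → ∀ x y z : ℤ,
    ∃ u v w : ℤ, a * x ^ 2 + b * y ^ 2 + c * z ^ 2 + r * y * z + s * x * z + t * x * y =
      u ^ 2 + v ^ 2 + v * w + w ^ 2 := by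
  induction n with
  | zero => intro a b c r s t h h0; omega
  | succ n ih =>
    intro a b c r s t hn ha hA hd x y z
    obtain ⟨p, q, e, f, hdet, A, B, C, hA', hB', hC', hA0, hBA, hAC⟩ :=
      binary_reduction _ (4 * a * b - t ^ 2) (4 * a * r - 2 * s * t) (4 * a * c - s ^ 2) le_rfl hA
        (by
          have : 4 * (4 * a * b - t ^ 2) * (4 * a * c - s ^ 2) - (4 * a * r - 2 * s * t) ^ 2
            = 48 * a := by linear_combination 16 * a * hd
          omega)
    obtain ⟨k, hk⟩ := exists_shift a (t * p + s * e) ha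
    obtain ⟨l, hl⟩ := exists_shift a (t * q + s * f) ha
    obtain ⟨t', ht'⟩ : ∃ t', t' = t * p + s * e + 2 * a * k := ⟨_, rfl⟩
    obtain ⟨s', hs'⟩ : ∃ s', s' = t * q + s * f + 2 * a * l := ⟨_, rfl⟩
    obtain ⟨b', hb'⟩ : ∃ b', b' = a * k ^ 2 + b * p ^ 2 + c * e ^ 2 + r * p * e + s * k * e
      + t * k * p := ⟨_, rfl⟩
    obtain ⟨c', hc'⟩ : ∃ c', c' = a * l ^ 2 + b * q ^ 2 + c * f ^ 2 + r * q * f + s * l * f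
      + t * l * q := ⟨_, rfl⟩
    obtain ⟨r', hr'⟩ : ∃ r', r' = 2 * a * k * l + 2 * b * p * q + 2 * c * e * f
      + r * (p * f + q * e) + s * (k * f + l * e) + t * (k * q + l * p) := ⟨_, rfl⟩
    rw [← ht'] at hk
    rw [← hs'] at hl
    have hd' : 4 * a * b' * c' + r' * s' * t' - a * r' ^ 2 - b' * s' ^ 2 - c' * t' ^ 2 = 3 := by
      have : 4 * a * b' * c' + r' * s' * t' - a * r' ^ 2 - b' * s' ^ 2 - c' * t' ^ 2 =
        (p * f - q * e) ^ 2 *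
          (4 * a * b * c + r * s * t - a * r ^ 2 - b * s ^ 2 - c * t ^ 2) := by
        subst ht' hs' hb' hc' hr'; ring
      rw [this, hdet, hd]; norm_num
    have eA : A = 4 * a * b' - t' ^ 2 := by subst ht' hb'; rw [hA']; ring
    have eB : B = 4 * a * r' - 2 * s' * t' := by subst ht' hs' hr'; rw [hB']; ring
    have eC : C = 4 * a * c' - s' ^ 2 := by subst hs' hc'; rw [hC']; ring
    clear hA' hB' hC'
    have hdisc : 4 * A * C - B ^ 2 = 48 * a := by
      rw [eA, eB, eC]; linear_combination hd' * (16 * a)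
    -- the new coordinates of `(x, y, z)`
    obtain ⟨y', hy'⟩ : ∃ y', y' = f * y - q * z := ⟨_, rfl⟩
    obtain ⟨z', hz'⟩ : ∃ z', z' = -e * y + p * z := ⟨_, rfl⟩
    obtain ⟨x', hx'⟩ : ∃ x', x' = x - k * y' - l * z' := ⟨_, rfl⟩
    have hy : y = p * y' + q * z' := by subst hy' hz'; linear_combination -y * hdet
    have hz : z = e * y' + f * z' := by subst hy' hz'; linear_combination -z * hdet
    have hx : x = x' + k * y' + l * z' := by linarith
    have key : a * x ^ 2 + b * y ^ 2 + c * z ^ 2 + r * y * z + s * x * z + t * x * y =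
        a * x' ^ 2 + b' * y' ^ 2 + c' * z' ^ 2 + r' * y' * z' + s' * x' * z' + t' * x' * y' := by
      rw [hx, hy, hz, ht', hs', hb', hc', hr']; ring
    rw [key]
    have hb0 : 0 < b' := by
      have : 0 < 4 * a * b' := by linarith [sq_nonneg t']
      exact pos_of_mul_pos_right this (by linarith)
    by_cases hba : b' < a
    · obtain ⟨u, v, w, h⟩ := ih b' a c' s' r' t' (by omega) hb0 (by linarith)
        (by linarith) y' x' z'
      exact ⟨u, v, w, by rw [← h]; ring⟩
    · push Not at hba
      have hB2 := sq_le_sq' (neg_le_of_abs_le hBA) (le_of_abs_le hBA)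
      have ht2 := sq_le_sq' (neg_le_of_abs_le hk) (le_of_abs_le hk)
      have ha1 : a = 1 := eq_one_of_bounds a b' A B C t' ha hba hdisc hB2 hAC hA0 ht2 eA
      subst ha1
      simp only [one_mul, mul_one] at *
      apply ternary_final b' c' r' s' t' (by linarith) (by linarith) hk hl
      · rw [← eB, ← eA]; exact hBA
      · rw [← eC, ← eA]; exact hAC

/-! ### Values of `u² + v² + vw + w²` -/

/-- The congruence and the equation make `-δ ≡ τ²` modulo `p` solvable, by quadratic reciprocity.
With `τ² + δ = pa`, the form `ax² + py² + mz² + s xz + 2τ xy` is positive, has discriminant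
`4mδ - ps² = 3`, and takes the value `m` at `(0, 0, 1)`. -/
theorem rep_of_prime (m δ p s : ℕ) (hp : p.Prime) (hp4 : p % 4 = 1) (hδ : δ % 12 = 1)
    (h : p * s ^ 2 + 3 = 4 * m * δ) :
    ∃ u v w : ℤ, (m : ℤ) = u ^ 2 + v ^ 2 + v * w + w ^ 2 := by
  have hpodd : Odd p := by rw [Nat.odd_iff]; omega
  have hδodd : Odd δ := by rw [Nat.odd_iff]; omega
  have := Fact.mk hp
  zify at h
  have h3 : jacobiSym 3 δ = 1 := by
    have := jacobiSym.quadratic_reciprocity_one_mod_four' (a := 3) (b := δ) (by decide) (by omega)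
    push_cast at this
    rw [this, jacobiSym.mod_left, show (δ : ℤ) % (3 : ℕ) = 1 by omega, jacobiSym.one_left]
  have hm3 : jacobiSym (-3) δ = 1 := by
    rw [jacobiSym.neg 3 hδodd, h3, ZMod.χ₄_nat_one_mod_four (by omega), mul_one]
  have hps : jacobiSym p δ * jacobiSym s δ ^ 2 = 1 := by
    rw [← jacobiSym.pow_left, ← jacobiSym.mul_left, ← hm3]
    apply jacobiSym.mod_left'
    rw [show (p * s ^ 2 : ℤ) = -3 + δ * (4 * m) by linarith]
    simp
  have hpδ : jacobiSym p δ = 1 := by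
    rcases jacobiSym.trichotomy s δ with h | h | h <;> simp_all
  have hsq : IsSquare ((-δ : ℤ) : ZMod p) := by
    apply ZMod.isSquare_of_jacobiSym_eq_one
    rw [jacobiSym.neg _ hpodd, ZMod.χ₄_nat_one_mod_four hp4,
      jacobiSym.quadratic_reciprocity_one_mod_four' hδodd hp4, hpδ, mul_one]
  obtain ⟨y, hy⟩ := hsq
  obtain ⟨τ, rfl⟩ := ZMod.intCast_surjective y
  obtain ⟨a, ha⟩ : (p : ℤ) ∣ τ ^ 2 + δ := by
    rw [← ZMod.intCast_zmod_eq_zero_iff_dvd]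
    push_cast at hy ⊢
    linear_combination -hy
  have hp0 : (0 : ℤ) < p := by exact_mod_cast hp.pos
  have hδ0 : (0 : ℤ) < δ := by omega
  have ha0 : 0 < a := by
    have : 0 < (p : ℤ) * a := by rw [← ha]; positivity
    exact pos_of_mul_pos_right this hp0.le
  obtain ⟨u, v, w, huvw⟩ := ternary_class_one _ a p m 0 s (2 * τ) le_rfl ha0
    (by nlinarith) (by linear_combination -4 * m * ha - h) 0 0 1
  exact ⟨u, v, w, by rw [← huvw]; ring⟩

/-- Uses `rep_of_prime` with `s = 1`, `δ = 12j + 1` and `p = 4mδ - 3 = 48mj + (4m - 3)`. -/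
theorem rep_of_not_dvd (m : ℕ) (hm : m % 3 ≠ 0) :
    ∃ u v w : ℤ, (m : ℤ) = u ^ 2 + v ^ 2 + v * w + w ^ 2 := by
  obtain ⟨c, hc⟩ : ∃ c, c + 3 = 4 * m := ⟨4 * m - 3, by omega⟩
  have hcop : c.Coprime (48 * m) := by
    rw [show 48 * m = 2 ^ 4 * 3 * m by ring]
    refine Nat.Coprime.mul_right (Nat.Coprime.mul_right ?_ ?_) ?_
    · exact Nat.Coprime.pow_right 4 (Nat.coprime_two_right.2 (by rw [Nat.odd_iff]; omega))
    · exact ((Nat.Prime.coprime_iff_not_dvd Nat.prime_three).2 (by omega)).symm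
    · refine Nat.Coprime.symm (Nat.coprime_of_dvd fun q hq hqm hqc => ?_)
      have h3 : q ∣ 3 := (Nat.dvd_add_right hqc).1 (hc ▸ hqm.mul_left 4)
      rw [(Nat.prime_dvd_prime_iff_eq hq Nat.prime_three).1 h3] at hqm
      omega
  obtain ⟨p, hpc, hp, hmod⟩ := Nat.forall_exists_prime_gt_and_modEq c (by omega) hcop
  obtain ⟨j, hj⟩ := (Nat.modEq_iff_dvd' hpc.le).1 hmod.symm
  have hj' : p = c + 48 * (m * j) := by rw [← mul_assoc]; omega
  exact rep_of_prime m (12 * j + 1) p 1 hp (by omega) (by omega) (by rw [hj']; linarith)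

/-- For `m = 3k`, uses `rep_of_prime` with `s = 3`, `δ = 12j + 1` and
`p = (4kδ - 1) / 3 = 16kj + (4k - 1) / 3`. -/
theorem rep_of_mod_nine (m : ℕ) (hm : m % 9 = 3) :
    ∃ u v w : ℤ, (m : ℤ) = u ^ 2 + v ^ 2 + v * w + w ^ 2 := by
  obtain ⟨k, rfl⟩ : ∃ k, m = 3 * k := ⟨m / 3, by omega⟩
  obtain ⟨c, hc⟩ : ∃ c, 3 * c + 1 = 4 * k := ⟨(4 * k - 1) / 3, by omega⟩
  have hcop : c.Coprime (16 * k) := by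
    refine Nat.Coprime.mul_right ?_ ?_
    · exact Nat.Coprime.pow_right 4 (Nat.coprime_two_right.2 (by rw [Nat.odd_iff]; omega))
    · refine Nat.Coprime.symm (Nat.coprime_of_dvd fun q hq hqk hqc => ?_)
      exact hq.one_lt.ne' (Nat.dvd_one.1
        ((Nat.dvd_add_right (hqc.mul_left 3)).1 (hc ▸ hqk.mul_left 4)))
  obtain ⟨p, hpc, hp, hmod⟩ := Nat.forall_exists_prime_gt_and_modEq c (by omega) hcop
  obtain ⟨j, hj⟩ := (Nat.modEq_iff_dvd' hpc.le).1 hmod.symm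
  have hj' : p = c + 16 * (k * j) := by rw [← mul_assoc]; omega
  exact rep_of_prime (3 * k) (12 * j + 1) p 3 hp (by omega) (by omega) (by rw [hj']; linarith)

/-! ### Passage to the quaternary form -/

/-- The factor `√-3` of an Eisenstein integer of norm divisible by `3` can be split off. -/
theorem exists_three_mul_norm (v w : ℤ) (h : 3 ∣ v - w) :
    ∃ z t : ℤ, v ^ 2 + v * w + w ^ 2 = 3 * (z ^ 2 + z * t + t ^ 2) := by
  obtain ⟨k, hk⟩ := h
  obtain rfl : v = w + 3 * k := by linarith
  exact ⟨w + k, k, by ring⟩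

theorem dvd_of_norm (u v w : ℤ) :
    (3 ∣ u ^ 2 + v ^ 2 + v * w + w ^ 2 → 3 ∣ v - w) ∧
      (3 ∣ u ^ 2 + v ^ 2 + v * w + w ^ 2 - 1 → ¬ 3 ∣ u → 3 ∣ v - w) := by
  have key : ∀ u v w : ZMod 3, (u ^ 2 + v ^ 2 + v * w + w ^ 2 = 0 → v - w = 0) ∧
      (u ^ 2 + v ^ 2 + v * w + w ^ 2 - 1 = 0 → ¬ u = 0 → v - w = 0) := by decide
  have := key u v w
  have cast := fun x : ℤ => ZMod.intCast_zmod_eq_zero_iff_dvd x 3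
  push_cast at cast
  simp only [← cast]
  push_cast
  exact this

/-- One of `v`, `w`, `v + w` is even, and completing the square with respect to it is integral. -/
theorem exists_sq_add_three_sq (v w : ℤ) :
    ∃ p r : ℤ, v ^ 2 + v * w + w ^ 2 = p ^ 2 + 3 * r ^ 2 := by
  rcases Int.even_or_odd' v with ⟨k, rfl | rfl⟩
  · exact ⟨k + w, k, by ring⟩
  rcases Int.even_or_odd' w with ⟨l, rfl | rfl⟩
  · exact ⟨2 * k + 1 + l, l, by ring⟩
  · exact ⟨k - l, k + l + 1, by ring⟩

theorem universal (n : ℕ) : ∃ x y z w : ℤ,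
    (n : ℤ) = x ^ 2 + 2 * y ^ 2 + 3 * (z ^ 2 + z * w + w ^ 2) := by
  induction n using Nat.strong_induction_on with
  | _ n ih =>
  rcases Nat.eq_zero_or_pos n with rfl | hn
  · exact ⟨0, 0, 0, 0, by simp⟩
  have h3 : n % 3 = 0 ∨ n % 3 = 1 ∨ n % 3 = 2 := by omega
  rcases h3 with h3 | h3 | h3
  · obtain ⟨k, rfl⟩ : ∃ k, n = 3 * k := ⟨n / 3, by omega⟩
    obtain ⟨x, y, z, w, h⟩ := ih k (by omega)
    exact ⟨x + 2 * y, x - y, z - w, z + 2 * w, by push_cast; rw [h]; ring⟩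
  · obtain ⟨u, v, w, h⟩ := rep_of_not_dvd n (by omega)
    by_cases hu : 3 ∣ u
    · obtain ⟨p, r, hpr⟩ := exists_sq_add_three_sq v w
      obtain ⟨k, rfl⟩ := hu
      exact ⟨p, 0, r - k, 2 * k, by linear_combination h + hpr⟩
    · obtain ⟨z, t, hzt⟩ := exists_three_mul_norm v w
        ((dvd_of_norm u v w).2 (by rw [← h]; omega) hu)
      exact ⟨u, 0, z, t, by linear_combination h + hzt⟩
  · have main : ∀ m y : ℕ, n = m + 2 * y ^ 2 → m % 9 = 3 → ∃ x y z w : ℤ,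
        (n : ℤ) = x ^ 2 + 2 * y ^ 2 + 3 * (z ^ 2 + z * w + w ^ 2) := by
      intro m y hnm hm
      obtain ⟨u, v, w, h⟩ := rep_of_mod_nine m hm
      obtain ⟨z, t, hzt⟩ := exists_three_mul_norm v w
        ((dvd_of_norm u v w).1 (by rw [← h]; omega))
      exact ⟨u, y, z, t, by rw [hnm]; push_cast; linear_combination h + hzt⟩
    -- `2y²` is `2`, `8`, `5` modulo `9` for `y = 1, 2, 4`; smaller `n` are represented explicitly
    have h9 : n % 9 = 5 ∨ n = 2 ∨ (n % 9 = 2 ∧ 8 ≤ n) ∨ n = 8 ∨ n = 17 ∨ n = 26 ∨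
      (n % 9 = 8 ∧ 32 ≤ n) := by omega
    rcases h9 with h | rfl | h | rfl | rfl | rfl | h
    · exact main (n - 2) 1 (by omega) (by omega)
    · exact ⟨0, 1, 0, 0, by norm_num⟩
    · exact main (n - 8) 2 (by omega) (by omega)
    · exact ⟨0, 2, 0, 0, by norm_num⟩
    · exact ⟨3, 2, 0, 0, by norm_num⟩
    · exact ⟨3, 2, 1, 1, by norm_num⟩
    · exact main (n - 32) 4 (by omega) (by omega)

theorem eisenstein_nonneg (z w : ℤ) : 0 ≤ z ^ 2 + z * w + w ^ 2 := by
  nlinarith [sq_nonneg (z + w), sq_nonneg z, sq_nonneg w]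

theorem eisenstein_ne_two (z w : ℤ) : z ^ 2 + z * w + w ^ 2 ≠ 2 := by
  intro h
  obtain ⟨p, r, hpr⟩ := exists_sq_add_three_sq z w
  have hp : p ^ 2 + 3 * r ^ 2 = 2 := by linarith
  have : p ≤ 1 := by nlinarith
  have : -1 ≤ p := by nlinarith
  have : r ≤ 0 := by nlinarith
  have : 0 ≤ r := by nlinarith
  interval_cases p <;> interval_cases r <;> omega

theorem stmt_14 (a b : ℕ) (ha : 0 < a) (hb : 0 < b) (hab : a ≤ b)
    (h : ∀ n ∈ ({1, 2, 6} : Set ℕ), ∃ x y z w : ℤ,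
      (n : ℤ) = a * x ^ 2 + b * y ^ 2 + 3 * (z ^ 2 + z * w + w ^ 2)) :
    ∀ n : ℕ, ∃ x y z w : ℤ,
      (n : ℤ) = a * x ^ 2 + b * y ^ 2 + 3 * (z ^ 2 + z * w + w ^ 2) := by
  have coef : ∀ (c : ℕ) (x : ℤ), x = 0 ∨ (c : ℤ) ≤ c * x ^ 2 := by
    intro c x
    rcases eq_or_ne x 0 with hx | hx
    · exact .inl hx
    · have : 1 ≤ x ^ 2 := by have := sq_pos_of_ne_zero hx; omega
      exact .inr (by nlinarith)
  have ha1 : a = 1 := by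
    obtain ⟨x, y, z, w, h1⟩ := h 1 (by simp)
    have := eisenstein_nonneg z w
    have hx : 0 ≤ (a : ℤ) * x ^ 2 := by positivity
    have hy : 0 ≤ (b : ℤ) * y ^ 2 := by positivity
    rcases coef a x with rfl | hx'
    · rcases coef b y with rfl | hy'
      · push_cast at h1; omega
      · push_cast at h1; omega
    · push_cast at h1; omega
  subst ha1
  have hb2 : b ≤ 2 := by
    obtain ⟨x, y, z, w, h1⟩ := h 2 (by simp)
    have := eisenstein_nonneg z w
    have hx : 0 ≤ x ^ 2 := by positivity
    rcases coef b y with rfl | hy'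
    · have hx2 : x ^ 2 = 2 := by push_cast at h1; omega
      have : x ≤ 1 := by nlinarith
      have : -1 ≤ x := by nlinarith
      interval_cases x <;> omega
    · push_cast at h1; omega
  have hb1 : b ≠ 1 := by
    rintro rfl
    obtain ⟨x, y, z, w, h1⟩ := h 6 (by simp)
    have hN := eisenstein_nonneg z w
    have hN2 := eisenstein_ne_two z w
    generalize z ^ 2 + z * w + w ^ 2 = N at *
    push_cast at h1
    have : x ≤ 2 := by nlinarith [sq_nonneg y]
    have : -2 ≤ x := by nlinarith [sq_nonneg y]
    have : y ≤ 2 := by nlinarith [sq_nonneg x]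
    have : -2 ≤ y := by nlinarith [sq_nonneg x]
    interval_cases x <;> interval_cases y <;> omega
  obtain rfl : b = 2 := by omega
  intro n
  obtain ⟨x, y, z, w, hn⟩ := universal n
  exact ⟨x, y, z, w, by rw [hn]; push_cast; ring⟩
end

section
/- Let a, b be positive integers with a ≤ b. If the quadratic form f^{a,b}_4(x,y,z,w) = a·x² + b·y² + 4·(z² + z·w + w²) represents each of the integers 1, 2, 3 (with x, y, z, w ∈ ℤ), then it represents every nonnegative integer. -/
/-!
Representing `1`, `2` and `3` forces `a = 1` and `b = 2`, so the point is that
`x² + 2y² + 4(z² + zw + w²)` is universal. It contains `x² + 2y² + 4z²` (put `w = 0`) and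
`x² + 2y² + 4z² + 12` (put `w = 2` and shift `z`), and universality is reduced to sums of
three squares as follows.

* If `4 ∣ n`, a representation of `n / 4` is scaled by `2`.
* If `n` is odd, write `2n = A² + B² + C²`; exactly one of the three, say `C`, is even, so
  `n = ((A+B)/2)² + ((A-B)/2)² + 2(C/2)²`, and one of `(A±B)/2` is even because `n` is odd.
* If `n = 2m` with `m ≡ 1 (mod 4)`, write `m = A² + B² + C²` and use that two of the three have
  the same parity: `m = C² + 2((A+B)/2)² + 2((A-B)/2)²`. If `m ≡ 3 (mod 4)`, do this for `m - 6`
  and make up the difference by the summand `12`; the one exception, `n = 6 = 2² + 2`, is direct.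

The sums of three squares needed (`n ≡ 2 (mod 4)` and `n ≡ 1 (mod 4)`) come from Dirichlet's proof
of the three-squares theorem. Every positive definite integral ternary form of determinant `1`
takes only sums of three squares as values (`ternary_reduction`, by Gauss's reduction). Dirichlet's
theorem on primes and quadratic reciprocity for the Jacobi symbol give some `d > 0` such that `-d`
is a square modulo `dn - 1`, and this yields such a form with `n` on its diagonal
(`sum_three_squares_of_dvd`).
-/

/-! ### Reduction of ternary forms of determinant one -/

lemma exists_small_residue (k K : ℤ) (hK : 0 < K) : ∃ m : ℤ, 4 * (k + m * K) ^ 2 ≤ K ^ 2 := by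
  refine ⟨-((2 * k + K) / (2 * K)), ?_⟩
  have h1 := Int.emod_add_mul_ediv (2 * k + K) (2 * K)
  have h2 := Int.emod_nonneg (2 * k + K) (show 2 * K ≠ 0 by omega)
  have h3 := Int.emod_lt_of_pos (2 * k + K) (show 0 < 2 * K by omega)
  set q := (2 * k + K) / (2 * K)
  set e := (2 * k + K) % (2 * K)
  have h4 : 2 * (k + -q * K) = e - K := by linarith
  have h5 : 4 * (k + -q * K) ^ 2 = (e - K) ^ 2 := by rw [← h4]; ring
  rw [h5]
  nlinarith

/-- A positive definite integral ternary form of determinant `1`, with Gram matrix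
`!![a, t, s; t, b, r; s, r, c]`, takes only sums of three squares as values. The form is reduced by
lexicographic descent on its leading minors `a` and `a * b - t ^ 2`. -/
theorem ternary_reduction (N M : ℕ) : ∀ (a b c r s t : ℤ), 0 < a → 0 < a * b - t ^ 2 →
    a * b * c + 2 * r * s * t - a * r ^ 2 - b * s ^ 2 - c * t ^ 2 = 1 →
    a.toNat = N → (a * b - t ^ 2).toNat = M →
    ∀ x y z : ℤ, ∃ p q w : ℤ,
      a * x ^ 2 + b * y ^ 2 + c * z ^ 2 + 2 * r * y * z + 2 * s * x * z + 2 * t * x * y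
        = p ^ 2 + q ^ 2 + w ^ 2 := by
  induction N using Nat.strong_induction_on generalizing M with
  | _ N ihN =>
  induction M using Nat.strong_induction_on with
  | _ M ihM =>
  intro a b c r s t ha hK hdet hN hM x y z
  set K := a * b - t ^ 2 with hKdef
  -- The form `a * f - (a x + t y + s z) ^ 2` in `y, z` has coefficients `K`, `a * r - s * t`,
  -- `a * c - s ^ 2` and determinant `a`; translating `y` by `z` makes its middle one small.
  obtain ⟨m, hm⟩ := exists_small_residue (a * r - s * t) K hK
  obtain ⟨r', hr'⟩ : ∃ r', r' = r + m * b := ⟨_, rfl⟩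
  obtain ⟨s', hs'⟩ : ∃ s', s' = s + m * t := ⟨_, rfl⟩
  obtain ⟨c', hc'⟩ : ∃ c', c' = c + 2 * m * r + m ^ 2 * b := ⟨_, rfl⟩
  have hk12 : a * r - s * t + m * K = a * r' - s' * t := by rw [hr', hs', hKdef]; ring
  rw [hk12] at hm
  have hdet' : a * b * c' + 2 * r' * s' * t - a * r' ^ 2 - b * s' ^ 2 - c' * t ^ 2 = 1 := by
    rw [← hdet, hr', hs', hc']; ring
  have hKdet : K * (a * c' - s' ^ 2) = a + (a * r' - s' * t) ^ 2 := by
    rw [hKdef]; linear_combination a * hdet'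
  have hL : 0 < a * c' - s' ^ 2 := by
    have : 0 < K * (a * c' - s' ^ 2) := by rw [hKdet]; positivity
    exact pos_of_mul_pos_right this hK.le
  by_cases hlt : a * c' - s' ^ 2 < K
  · -- Swapping `y` and `z` lowers the second minor.
    obtain ⟨p, q, w, h⟩ := ihM (a * c' - s' ^ 2).toNat (by omega) a c' b r' t s' ha hL
      (by rw [← hdet']; ring) hN rfl x z (y - m * z)
    refine ⟨p, q, w, ?_⟩
    rw [← h, hr', hs', hc']; ring
  have hK3 : 3 * K ^ 2 ≤ 4 * a := by
    have : K * K ≤ K * (a * c' - s' ^ 2) := mul_le_mul_of_nonneg_left (by omega) hK.le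
    nlinarith
  rcases (show a = 1 ∨ 2 ≤ a by omega) with h1 | h2
  · -- Here both minors are `1` and the form is the sum of squares given by its Jacobi decomposition.
    subst h1
    have hK1 : K = 1 := by nlinarith
    have hb : b = 1 + t ^ 2 := by omega
    have hL1 : c' = 1 + s' ^ 2 + (r' - s' * t) ^ 2 := by rw [hK1] at hKdet; linarith
    refine ⟨x + t * (y - m * z) + s' * z, (y - m * z) + (r' - s' * t) * z, z, ?_⟩
    have : 1 * x ^ 2 + b * y ^ 2 + c * z ^ 2 + 2 * r * y * z + 2 * s * x * z + 2 * t * x * y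
      = 1 * x ^ 2 + b * (y - m * z) ^ 2 + c' * z ^ 2 + 2 * r' * (y - m * z) * z
        + 2 * s' * x * z + 2 * t * x * (y - m * z) := by
      rw [hr', hs', hc']; ring
    rw [this, hL1, hb]; ring
  · -- Translating `x` by `y` and swapping them lowers the first minor.
    obtain ⟨l, hl⟩ := exists_small_residue t a ha
    obtain ⟨t', ht'⟩ : ∃ t', t' = t + l * a := ⟨_, rfl⟩
    obtain ⟨b', hb'⟩ : ∃ b', b' = b + 2 * l * t + l ^ 2 * a := ⟨_, rfl⟩
    obtain ⟨r'', hr''⟩ : ∃ r'', r'' = r + l * s := ⟨_, rfl⟩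
    rw [← ht'] at hl
    have hK' : a * b' - t' ^ 2 = K := by rw [hKdef, hb', ht']; ring
    have hb0 : 0 < b' := by
      have : 0 < a * b' := by linarith [sq_nonneg t']
      exact pos_of_mul_pos_right this ha.le
    have hba : b' < a := by
      by_contra hcon
      have h3 : a * a ≤ a * b' := mul_le_mul_of_nonneg_left (by omega) ha.le
      have h4 : 3 * a ^ 2 ≤ 4 * K := by linarith
      -- `3 a² ≤ 4 K` and `3 K² ≤ 4 a` give `27 a³ ≤ 64`, against `2 ≤ a`.
      have h5 : 2 * a ≤ a ^ 2 := by rw [sq]; exact mul_le_mul_of_nonneg_right h2 ha.le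
      have h6 : 3 * a ≤ 2 * K := by linarith
      have h7 : (3 * a) ^ 2 ≤ (2 * K) ^ 2 := pow_le_pow_left₀ (by linarith) h6 2
      linarith
    obtain ⟨p, q, w, h⟩ := ihN b'.toNat (by omega) (b' * a - t' ^ 2).toNat b' a c s r'' t' hb0
      (by rw [mul_comm b' a, hK']; exact hK) (by rw [← hdet, hb', ht', hr'']; ring) rfl rfl
      y (x - l * y) z
    refine ⟨p, q, w, ?_⟩
    rw [← h, hb', ht', hr'']; ring

/-! ### Sums of three squares -/

/-- If `-d` is a square modulo `d * n - 1`, then `n` is a sum of three squares: it is a diagonal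
entry of a positive definite integral matrix of determinant `1`. -/
lemma sum_three_squares_of_dvd (n d u : ℤ) (hd : 0 < d) (hdn : 0 < d * n - 1)
    (h : d * n - 1 ∣ u ^ 2 + d) : ∃ p q w : ℤ, n = p ^ 2 + q ^ 2 + w ^ 2 := by
  obtain ⟨v, hv⟩ := h
  obtain ⟨p, q, w, h⟩ := ternary_reduction _ _ (d * n - 1) v n 1 0 u hdn
    (by rw [← hv]; linarith) (by linear_combination -n * hv) rfl rfl 0 0 1
  exact ⟨p, q, w, by rw [← h]; ring⟩

lemma exists_dvd_sq_add {p d : ℕ} (hp : p.Prime) (h : jacobiSym (-(d : ℤ)) p = 1) :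
    ∃ u : ℤ, (p : ℤ) ∣ u ^ 2 + d := by
  have := Fact.mk hp
  obtain ⟨v, hv⟩ := ZMod.isSquare_of_jacobiSym_eq_one h
  obtain ⟨u, rfl⟩ := ZMod.intCast_surjective v
  refine ⟨u, (ZMod.intCast_zmod_eq_zero_iff_dvd _ p).1 ?_⟩
  push_cast at hv ⊢
  linear_combination -hv

/-- For a prime `p = (4v + 1) n - 1`, reciprocity shows that `-(4v + 1)` is a square modulo `p`. -/
lemma sum_three_squares_two_mod_four (n : ℕ) (hn : n % 4 = 2) :
    ∃ p q w : ℤ, (n : ℤ) = p ^ 2 + q ^ 2 + w ^ 2 := by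
  have hcop : (n - 1).Coprime (4 * n) := by
    apply Nat.Coprime.mul_right
    · rw [show (4 : ℕ) = 2 ^ 2 by norm_num]
      exact Nat.Coprime.pow_right 2 (Nat.coprime_two_right.2 (Nat.odd_iff.2 (by omega)))
    · conv_rhs => rw [show n = n - 1 + 1 by omega]
      simp
  obtain ⟨p, hpn, hp, hmod⟩ := Nat.forall_exists_prime_gt_and_modEq n (by omega) hcop
  obtain ⟨v, hv⟩ := (Nat.modEq_iff_dvd' (by omega)).1 hmod.symm
  obtain ⟨d, hd⟩ : ∃ d, d = 4 * v + 1 := ⟨_, rfl⟩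
  have hpd : p + 1 = d * n := by
    have : p + 1 = 4 * n * v + n := by omega
    rw [this, hd]; ring
  have hp4 : p % 4 = 1 := by
    have : p = 4 * (n * v) + (n - 1) := by rw [← mul_assoc]; omega
    omega
  have hpdZ : (p : ℤ) + 1 = d * n := by exact_mod_cast hpd
  have hodd : Odd p := Nat.odd_iff.2 (by omega)
  have hdodd : Odd d := Nat.odd_iff.2 (by omega)
  have hJ : jacobiSym (-(d : ℤ)) p = 1 := by
    rw [jacobiSym.neg _ hodd, ZMod.χ₄_nat_one_mod_four hp4, one_mul,
      jacobiSym.quadratic_reciprocity_one_mod_four (by omega) hodd,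
      jacobiSym.mod_left' (a₂ := -1), jacobiSym.at_neg_one hdodd,
      ZMod.χ₄_nat_one_mod_four (by omega)]
    exact Int.ModEq.symm ((Int.modEq_iff_dvd).2 ⟨n, by linarith⟩)
  obtain ⟨u, hu⟩ := exists_dvd_sq_add hp hJ
  have hpe : (d : ℤ) * n - 1 = p := by linarith
  exact sum_three_squares_of_dvd n d u (by omega) (by rw [hpe]; exact_mod_cast hp.pos)
    (by rwa [hpe])

/-- For a prime `p` with `2p = (8v + 3) n - 1`, reciprocity shows that `-(8v + 3)` is a square
modulo `p`, hence modulo `2p`. -/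
lemma sum_three_squares_one_mod_four (n : ℕ) (hn : n % 4 = 1) :
    ∃ p q w : ℤ, (n : ℤ) = p ^ 2 + q ^ 2 + w ^ 2 := by
  obtain ⟨g, hg⟩ : ∃ g, 2 * g + 1 = 3 * n := ⟨(3 * n - 1) / 2, by omega⟩
  have hcop : g.Coprime (4 * n) := by
    apply Nat.Coprime.mul_right
    · rw [show (4 : ℕ) = 2 ^ 2 by norm_num]
      exact Nat.Coprime.pow_right 2 (Nat.coprime_two_right.2 (Nat.odd_iff.2 (by omega)))
    · rw [← Nat.isCoprime_iff_coprime]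
      exact ⟨-2, 3, by omega⟩
  obtain ⟨p, hpn, hp, hmod⟩ := Nat.forall_exists_prime_gt_and_modEq g (by omega) hcop
  obtain ⟨v, hv⟩ := (Nat.modEq_iff_dvd' (by omega)).1 hmod.symm
  obtain ⟨d, hd⟩ : ∃ d, d = 8 * v + 3 := ⟨_, rfl⟩
  have hpg : p = 4 * (n * v) + g := by rw [← mul_assoc]; omega
  have hpd : 2 * p + 1 = d * n := by
    have : 2 * p + 1 = 8 * (n * v) + 3 * n := by omega
    rw [this, hd]; ring
  have hpdZ : 2 * (p : ℤ) + 1 = d * n := by exact_mod_cast hpd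
  have hodd : Odd p := Nat.odd_iff.2 (by omega)
  have hdodd : Odd d := Nat.odd_iff.2 (by omega)
  have hJp : jacobiSym p d = 1 := by
    have h1 : jacobiSym (-2) d = 1 := by
      rw [jacobiSym.at_neg_two hdodd, ZMod.χ₈'_nat_eq_if_mod_eight]
      rw [if_neg (by omega), if_pos (by omega)]
    have h2 : jacobiSym (-2 * p) d = 1 := by
      rw [jacobiSym.mod_left' (a₂ := 1), jacobiSym.one_left]
      exact (Int.modEq_iff_dvd).2 ⟨n, by linarith⟩
    rwa [jacobiSym.mul_left, h1, one_mul] at h2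
  have hJ : jacobiSym (-(d : ℤ)) p = 1 := by
    rw [jacobiSym.neg _ hodd]
    rcases (show p % 4 = 1 ∨ p % 4 = 3 by have := Nat.odd_iff.1 hodd; omega) with h | h
    · rw [ZMod.χ₄_nat_one_mod_four h, one_mul,
        jacobiSym.quadratic_reciprocity_one_mod_four' hdodd h, hJp]
    · rw [ZMod.χ₄_nat_three_mod_four h,
        jacobiSym.quadratic_reciprocity_three_mod_four (by omega) h, hJp]
      norm_num
  have hpe : (d : ℤ) * n - 1 = 2 * p := by linarith
  have hodd2 : ∃ u : ℤ, (p : ℤ) ∣ u ^ 2 + d ∧ Odd u := by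
    obtain ⟨u, hu⟩ := exists_dvd_sq_add hp hJ
    rcases Int.even_or_odd u with h | h
    · refine ⟨u + p, ?_, h.add_odd (by exact_mod_cast hodd)⟩
      rw [show (u + p) ^ 2 + (d : ℤ) = u ^ 2 + d + p * (2 * u + p) by ring]
      exact dvd_add hu (dvd_mul_right _ _)
    · exact ⟨u, hu, h⟩
  obtain ⟨u, hu, huo⟩ := hodd2
  refine sum_three_squares_of_dvd n d u (by omega)
    (by rw [hpe]; have := hp.pos; omega) ?_
  rw [hpe]
  have h2 : (2 : ℤ) ∣ u ^ 2 + d :=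
    even_iff_two_dvd.1 ((huo.pow).add_odd (by exact_mod_cast hdodd))
  have hc : IsCoprime (2 : ℤ) p := by
    rw [show (2 : ℤ) = ((2 : ℕ) : ℤ) by rfl, Nat.isCoprime_iff_coprime]
    exact Nat.coprime_two_left.2 hodd
  exact hc.mul_dvd h2 hu

/-! ### Universality of `x² + 2y² + 4(z² + zw + w²)` -/

/-- Among three integers two have the same parity, so `A² + B² + C²` has the form
`y² + 2u² + 2v²`. -/
lemma exists_sq_add_two_sq_add_two_sq {m : ℤ} (h : ∃ p q w : ℤ, m = p ^ 2 + q ^ 2 + w ^ 2) :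
    ∃ y u v : ℤ, m = y ^ 2 + 2 * u ^ 2 + 2 * v ^ 2 := by
  have key : ∀ p q w : ℤ, (p + q) % 2 = 0 →
      ∃ y u v : ℤ, p ^ 2 + q ^ 2 + w ^ 2 = y ^ 2 + 2 * u ^ 2 + 2 * v ^ 2 := by
    intro p q w h
    obtain ⟨e, he⟩ : ∃ e, p = 2 * e - q := ⟨(p + q) / 2, by omega⟩
    exact ⟨w, e, e - q, by rw [he]; ring⟩
  obtain ⟨p, q, w, rfl⟩ := h
  rcases (show (p + q) % 2 = 0 ∨ (p + w) % 2 = 0 ∨ (q + w) % 2 = 0 by omega) with h | h | h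
  · exact key p q w h
  · obtain ⟨y, u, v, e⟩ := key p w q h
    exact ⟨y, u, v, by rw [← e]; ring⟩
  · obtain ⟨y, u, v, e⟩ := key q w p h
    exact ⟨y, u, v, by rw [← e]; ring⟩

lemma odd_eq_sq_add_two_sq_add_four_sq (n : ℕ) (hn : n % 2 = 1) :
    ∃ x y z : ℤ, (n : ℤ) = x ^ 2 + 2 * y ^ 2 + 4 * z ^ 2 := by
  obtain ⟨y, u, v, h⟩ := exists_sq_add_two_sq_add_two_sq
    (sum_three_squares_two_mod_four (2 * n) (by omega))
  push_cast at h
  -- From `2n = y² + 2u² + 2v²`, `y` is even and `n = 2(y/2)² + u² + v²`.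
  have hy : Even y := by
    have : Even (y ^ 2) := ⟨n - u ^ 2 - v ^ 2, by linarith⟩
    exact (Int.even_pow.1 this).1
  obtain ⟨e, rfl⟩ := hy
  have hn' : (n : ℤ) = u ^ 2 + 2 * e ^ 2 + v ^ 2 := by linarith
  rcases Int.even_or_odd u with ⟨f, hf⟩ | ⟨f, hf⟩
  · exact ⟨v, e, f, by rw [hn', hf]; ring⟩
  rcases Int.even_or_odd v with ⟨g, hg⟩ | ⟨g, hg⟩
  · exact ⟨u, e, g, by rw [hn', hg]; ring⟩
  exfalso
  have : (n : ℤ) = 2 * (2 * f ^ 2 + 2 * f + 1 + e ^ 2 + 2 * g ^ 2 + 2 * g) := by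
    rw [hn', hf, hg]; ring
  omega

theorem universal_one_two (n : ℕ) : ∃ x y z w : ℤ,
    (n : ℤ) = x ^ 2 + 2 * y ^ 2 + 4 * (z ^ 2 + z * w + w ^ 2) := by
  induction n using Nat.strong_induction_on with
  | _ n ih =>
  rcases Nat.even_or_odd' n with ⟨m, rfl | hm⟩
  · rcases (show m = 0 ∨ m = 3 ∨ (0 < m ∧ m % 2 = 0) ∨ m % 4 = 1 ∨ (6 ≤ m ∧ m % 4 = 3) by omega)
      with rfl | rfl | ⟨h0, h⟩ | h | ⟨h6, h⟩
    · exact ⟨0, 0, 0, 0, by norm_num⟩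
    · exact ⟨2, 1, 0, 0, by norm_num⟩
    · obtain ⟨k, rfl⟩ : ∃ k, m = 2 * k := ⟨m / 2, by omega⟩
      obtain ⟨x, y, z, w, e⟩ := ih k (by omega)
      exact ⟨2 * x, 2 * y, 2 * z, 2 * w, by push_cast; rw [e]; ring⟩
    · obtain ⟨y, u, v, e⟩ := exists_sq_add_two_sq_add_two_sq (sum_three_squares_one_mod_four m h)
      exact ⟨2 * u, y, v, 0, by push_cast; rw [e]; ring⟩
    · obtain ⟨k, rfl⟩ : ∃ k, m = k + 6 := ⟨m - 6, by omega⟩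
      obtain ⟨y, u, v, e⟩ :=
        exists_sq_add_two_sq_add_two_sq (sum_three_squares_one_mod_four k (by omega))
      exact ⟨2 * u, y, v - 1, 2, by push_cast; rw [e]; ring⟩
  · obtain ⟨x, y, z, e⟩ := odd_eq_sq_add_two_sq_add_four_sq n (by omega)
    exact ⟨x, y, z, 0, by rw [e]; ring⟩

/-- A value of the form below `4` is already a value of `a x² + b y²`, with `x²` and `y²` equal to
`0` or `1`. -/
lemma small_value {a b n x y z w : ℤ} (ha : 0 < a) (hb : 0 < b) (hn : n < 4)
    (h : n = a * x ^ 2 + b * y ^ 2 + 4 * (z ^ 2 + z * w + w ^ 2)) :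
    n = 0 ∨ n = a ∨ n = b ∨ n = a + b := by
  have hQ : 0 ≤ z ^ 2 + z * w + w ^ 2 := by nlinarith [sq_nonneg (z + w), sq_nonneg z, sq_nonneg w]
  have hx := mul_nonneg ha.le (sq_nonneg x)
  have hy := mul_nonneg hb.le (sq_nonneg y)
  have hQ0 : z ^ 2 + z * w + w ^ 2 = 0 := by omega
  have small : ∀ c t : ℤ, 0 < c → c * t ^ 2 < 4 → t ^ 2 = 0 ∨ t ^ 2 = 1 := by
    intro c t hc hlt
    have h4 : t ^ 2 < 4 := by nlinarith [sq_nonneg t]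
    have h5 : -2 < t := by nlinarith
    have h6 : t < 2 := by nlinarith
    interval_cases t <;> norm_num
  rcases small a x ha (by omega) with e1 | e1 <;> rcases small b y hb (by omega) with e2 | e2 <;>
    rw [e1, e2, hQ0] at h <;> omega

theorem stmt_17 (a b : ℕ) (ha : 0 < a) (hb : 0 < b) (hab : a ≤ b)
    (h : ∀ n ∈ ({1, 2, 3} : Set ℕ), ∃ x y z w : ℤ,
      (n : ℤ) = a * x ^ 2 + b * y ^ 2 + 4 * (z ^ 2 + z * w + w ^ 2)) :
    ∀ n : ℕ, ∃ x y z w : ℤ,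
      (n : ℤ) = a * x ^ 2 + b * y ^ 2 + 4 * (z ^ 2 + z * w + w ^ 2) := by
  have key : ∀ n ∈ ({1, 2, 3} : Set ℕ), n < 4 →
      ((n : ℤ) = 0 ∨ (n : ℤ) = a ∨ (n : ℤ) = b ∨ (n : ℤ) = a + b) := by
    intro n hn h4
    obtain ⟨x, y, z, w, e⟩ := h n hn
    exact small_value (by exact_mod_cast ha) (by exact_mod_cast hb) (by exact_mod_cast h4) e
  have h1 := key 1 (by simp) (by norm_num)
  have h2 := key 2 (by simp) (by norm_num)
  have h3 := key 3 (by simp) (by norm_num)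
  obtain rfl : a = 1 := by omega
  obtain rfl : b = 2 := by omega
  intro n
  obtain ⟨x, y, z, w, e⟩ := universal_one_two n
  exact ⟨x, y, z, w, by rw [e]; push_cast; ring⟩
end
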